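/- Let (X,d,μ) be a metric measure space satisfying RCD*(K,N) for some K∈ℝ and N∈[1,∞). Then for any 1<p<∞, the Sobolev space W^{1,p}(X) coincides with W^{1,p}_0(X), i.e., Lipschitz functions with compact support in X are dense in W^{1,p}(X) with respect to the W^{1,p}-norm. -/

import Mathlib

open MeasureTheory Metric Set Filter Function
open scoped ENNReal NNReal

noncomputable section

/-! ### Basic nonsmooth calculus on metric measure spaces -/

/-- The pointwise Lipschitz constant `Lip f (x) = limsup_{y → x} |f y - f x| / d(x,y)`
of a real-valued function on a metric space. -/
def lipConst {X : Type*} [MetricSpace X] (f : X → ℝ) (x : X) : ℝ :=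
  limsup (fun y => |f y - f x| / dist y x) (nhdsWithin x {x}ᶜ)

/-- The Cheeger energy `Ch(f) = inf { liminf_j (1/2)∫ (Lip f_j)² dμ }`, the infimum being
taken over all sequences of Lipschitz functions `f_j` converging to `f` in `L²(X, μ)`. -/
def cheegerEnergy {X : Type*} [MetricSpace X] [MeasurableSpace X] (μ : Measure X)
    (f : X → ℝ) : ℝ≥0∞ :=
  ⨅ (F : ℕ → X → ℝ) (_ : ∀ j, ∃ L, LipschitzWith L (F j))
    (_ : Tendsto (fun j => eLpNorm (F j - f) 2 μ) atTop (nhds 0)),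
      liminf (fun j => (∫⁻ x, ENNReal.ofReal ((lipConst (F j) x) ^ 2) ∂μ) / 2) atTop

/-- `x` is a point of approximate continuity of `h` (w.r.t. the measure `μ`). -/
def ApproxContinuityPt {X : Type*} [MetricSpace X] [MeasurableSpace X] (μ : Measure X)
    (h : X → ℝ) (x : X) : Prop :=
  ∀ δ : ℝ, 0 < δ →
    Tendsto (fun r : ℝ => μ ({y ∈ ball x r | δ < |h y - h x|}) / μ (ball x r))
      (nhdsWithin 0 (Ioi 0)) (nhds 0)

/-- Membership in the Sobolev space `W^{1,p}(X)`: `f` is an `L^p`-limit of locally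
Lipschitz functions with finite `W^{1,p}`-norm which form a Cauchy sequence in the
`W^{1,p}`-norm `‖·‖_{L^p} + ‖Lip ·‖_{L^p}`. -/
def MemW1p {X : Type*} [MetricSpace X] [MeasurableSpace X] (μ : Measure X)
    (p : ℝ≥0∞) (f : X → ℝ) : Prop :=
  ∃ F : ℕ → X → ℝ,
    (∀ j, LocallyLipschitz (F j) ∧ MemLp (F j) p μ ∧ MemLp (lipConst (F j)) p μ) ∧
    Tendsto (fun j => eLpNorm (F j - f) p μ) atTop (nhds 0) ∧
    ∀ ε : ℝ, 0 < ε → ∃ J : ℕ, ∀ j ≥ J, ∀ k ≥ J,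
      eLpNorm (F j - F k) p μ + eLpNorm (lipConst (F j - F k)) p μ < ENNReal.ofReal ε

/-- An abstract first-order Sobolev calculus on the metric measure space `(X, d, μ)`:
for every open subset `Ω ⊆ X` it records the Sobolev space `H¹(Ω) = W^{1,2}(Ω)`
(as a set of functions), the subspace `H¹₀(Ω)` (the closure of the compactly supported
Lipschitz functions in the `W^{1,2}(Ω)`-norm), and the carré du champ
`Γ Ω f g = ⟨∇f, ∇g⟩` (the pointwise inner product of minimal relaxed gradients,
obtained by polarization), together with its basic structural properties. -/
structure SobolevCalculus (X : Type*) [MetricSpace X] [MeasurableSpace X]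
    (μ : Measure X) where
  /-- the Sobolev space `H¹(Ω) = W^{1,2}(Ω)` -/
  H1 : Set X → Set (X → ℝ)
  /-- the Sobolev space `H¹₀(Ω) = W^{1,2}₀(Ω)` -/
  H10 : Set X → Set (X → ℝ)
  /-- the carré du champ `Γ Ω f g = ⟨∇f, ∇g⟩` on `Ω` -/
  Γ : Set X → (X → ℝ) → (X → ℝ) → X → ℝ
  H10_subset_H1 : ∀ Ω, H10 Ω ⊆ H1 Ω
  /-- Lipschitz functions with compact support contained in `Ω` belong to `H¹₀(Ω)`. -/
  lip_mem_H10 : ∀ (Ω : Set X) (f : X → ℝ), (∃ L, LipschitzWith L f) →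
    IsCompact (tsupport f) → tsupport f ⊆ Ω → f ∈ H10 Ω
  Γ_symm : ∀ Ω f g, Γ Ω f g = Γ Ω g f
  Γ_add_left : ∀ Ω f₁ f₂ g, f₁ ∈ H1 Ω → f₂ ∈ H1 Ω →
    Γ Ω (f₁ + f₂) g = Γ Ω f₁ g + Γ Ω f₂ g
  Γ_smul_left : ∀ (Ω) (c : ℝ) (f g), Γ Ω (c • f) g = c • Γ Ω f g
  Γ_nonneg : ∀ Ω f x, 0 ≤ Γ Ω f f x
  /-- Cauchy–Schwarz inequality for the carré du champ. -/
  Γ_sq_le : ∀ Ω f g x, (Γ Ω f g x) ^ 2 ≤ Γ Ω f f x * Γ Ω g g x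
  Γ_measurable : ∀ Ω f g, Measurable (Γ Ω f g)
  Γ_integrableOn : ∀ Ω f g, f ∈ H1 Ω → g ∈ H1 Ω → IntegrableOn (Γ Ω f g) Ω μ
  /-- locality: the carré du champ on a smaller open set is the restriction. -/
  Γ_loc : ∀ Ω Ω' f g, Ω' ⊆ Ω → ∀ x ∈ Ω', Γ Ω f g x = Γ Ω' f g x
  mem_L2 : ∀ Ω f, f ∈ H1 Ω → MemLp f 2 (μ.restrict Ω)

namespace SobolevCalculus

variable {X : Type*} [MetricSpace X] [MeasurableSpace X] {μ : Measure X}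

/-- `|∇f|²`, the square of the minimal relaxed gradient of `f` on `Ω`. -/
def gradSq (S : SobolevCalculus X μ) (Ω : Set X) (f : X → ℝ) : X → ℝ :=
  S.Γ Ω f f

/-- Test functions for the weak Laplacian on `Ω`: elements of `H¹₀(Ω) ∩ L^∞(Ω)`. -/
def TestFun (S : SobolevCalculus X μ) (Ω : Set X) (φ : X → ℝ) : Prop :=
  φ ∈ S.H10 Ω ∧ MemLp φ ⊤ (μ.restrict Ω)

/-- The value `ℒf(φ) = −∫_Ω ⟨∇f, ∇φ⟩ dμ` of the weak Laplacian of `f` on `Ω` at `φ`. -/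
def lapVal (S : SobolevCalculus X μ) (Ω : Set X) (f φ : X → ℝ) : ℝ :=
  -∫ x in Ω, S.Γ Ω f φ x ∂μ

/-- `ℒ f = g` on `Ω` in the sense of distributions:
`ℒf(φ) = ∫_Ω g·φ dμ` for all `φ ∈ H¹₀(Ω) ∩ L^∞(Ω)`. -/
def IsLap (S : SobolevCalculus X μ) (Ω : Set X) (f g : X → ℝ) : Prop :=
  ∀ φ, S.TestFun Ω φ → S.lapVal Ω f φ = ∫ x in Ω, g x * φ x ∂μ

/-- `ℒ f` is, on `Ω`, the signed Radon measure `ν = νpos − νneg` (given by its Jordan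
decomposition into two measures which are finite on compact sets):
`ℒf(φ) = ∫ φ dνpos − ∫ φ dνneg` for all `φ ∈ H¹₀(Ω) ∩ L^∞(Ω)`. -/
def IsLapMeasure (S : SobolevCalculus X μ) (Ω : Set X) (f : X → ℝ)
    (νpos νneg : Measure X) : Prop :=
  (∀ K : Set X, IsCompact K → νpos K < ⊤ ∧ νneg K < ⊤) ∧
  ∀ φ, S.TestFun Ω φ → S.lapVal Ω f φ = (∫ x, φ x ∂νpos) - ∫ x, φ x ∂νneg

/-- `ℒ f` is, on `Ω`, a signed Radon measure whose Radon–Nikodym decomposition with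
respect to `μ` is `ℒf = ℓ·μ + σpos − σneg`, with absolutely continuous part `ℒ^ac f = ℓ`
and singular part `ℒ^sing f = σpos − σneg` (both `σpos, σneg` are Radon and singular
with respect to `μ`). -/
def HasLapDecomp (S : SobolevCalculus X μ) (Ω : Set X) (f ℓ : X → ℝ)
    (σpos σneg : Measure X) : Prop :=
  σpos.MutuallySingular μ ∧ σneg.MutuallySingular μ ∧
  (∀ K : Set X, IsCompact K → σpos K < ⊤ ∧ σneg K < ⊤) ∧
  IntegrableOn ℓ Ω μ ∧
  ∀ φ, S.TestFun Ω φ →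
    S.lapVal Ω f φ = (∫ x in Ω, ℓ x * φ x ∂μ) + (∫ x, φ x ∂σpos) - ∫ x, φ x ∂σneg

/-- The value `ℒ_w f(φ) = −∫_Ω ⟨∇f, ∇φ⟩ dμ_w` of the weighted Laplacian (with respect to
the weighted measure `μ_w = e^w·μ`) of `f` on `Ω` at `φ`. -/
def wLapVal (S : SobolevCalculus X μ) (Ω : Set X) (w f φ : X → ℝ) : ℝ :=
  -∫ x in Ω, S.Γ Ω f φ x * Real.exp (w x) ∂μ

/-- `ℒ_w f` is, on `Ω`, the signed Radon measure `ν = νpos − νneg`. -/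
def IsWLapMeasure (S : SobolevCalculus X μ) (Ω : Set X) (w f : X → ℝ)
    (νpos νneg : Measure X) : Prop :=
  (∀ K : Set X, IsCompact K → νpos K < ⊤ ∧ νneg K < ⊤) ∧
  ∀ φ, S.TestFun Ω φ → S.wLapVal Ω w f φ = (∫ x, φ x ∂νpos) - ∫ x, φ x ∂νneg

/-- `u` (with pointwise a.e. time derivative `ut = ∂ₜu`) is a locally weak solution of
the heat equation on `Ω × (0, T)` (`T ∈ (0,∞]`): for every geodesic ball `B_r` compactly
contained in `Ω`, every `0 < t₁ < t₂ < T` and every Lipschitz `φ` with compact support in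
`B_r × (t₁, t₂)`, `∫∫ (∂ₜu·φ + ⟨∇u, ∇φ⟩) dμ dt = 0`. -/
def IsWeakHeatSolution (S : SobolevCalculus X μ) (Ω : Set X) (T : ℝ≥0∞)
    (u ut : X → ℝ → ℝ) : Prop :=
  (∀ᵐ p ∂(μ.prod (volume : Measure ℝ)).restrict
      (Ω ×ˢ {t : ℝ | 0 < t ∧ ENNReal.ofReal t < T}),
    HasDerivAt (fun s => u p.1 s) (ut p.1 p.2) p.2) ∧
  ∀ (x₀ : X) (r : ℝ), 0 < r → closedBall x₀ r ⊆ Ω →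
  ∀ t₁ t₂ : ℝ, 0 < t₁ → t₁ < t₂ → ENNReal.ofReal t₂ < T →
  ∀ φ : X → ℝ → ℝ, (∃ L, LipschitzWith L (uncurry φ)) →
    IsCompact (tsupport (uncurry φ)) →
    tsupport (uncurry φ) ⊆ (ball x₀ r) ×ˢ Ioo t₁ t₂ →
    ∫ t in Ioo t₁ t₂, ∫ x in ball x₀ r,
      (ut x t * φ x t + S.Γ (ball x₀ r) (fun y => u y t) (fun y => φ y t) x) ∂μ = 0

end SobolevCalculus

/-- The Steklov average `u_h(x,t) = (1/h)∫₀ʰ u(x, t+τ) dτ`. -/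
def steklov {X : Type*} (u : X → ℝ → ℝ) (h : ℝ) (x : X) (t : ℝ) : ℝ :=
  (1 / h) * ∫ τ in (0:ℝ)..h, u x (t + τ)

/-- The Riemannian curvature-dimension condition `RCD*(K, N)` on the metric measure
space `(X, d, μ)`, encoded — via the equivalence of Erbar–Kuwada–Sturm and
Ambrosio–Mondino–Savaré — by a Sobolev calculus which is infinitesimally Hilbertian
(the Cheeger energy `f ↦ (1/2)∫|∇f|²dμ` is a quadratic form, i.e. satisfies the
parallelogram identity) and satisfies the (integrated, modified) Bakry–Émery–Bochner
inequality `BE(K, N)`. -/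
structure RCD (X : Type*) [MetricSpace X] [MeasurableSpace X] (μ : Measure X)
    (K N : ℝ) extends SobolevCalculus X μ where
  /-- infinitesimal Hilbertianity: the Cheeger energy is a quadratic form. -/
  hilbertian : ∀ f g : X → ℝ, f ∈ H1 Set.univ → g ∈ H1 Set.univ →
    (∫ x, Γ Set.univ (f + g) (f + g) x ∂μ) + (∫ x, Γ Set.univ (f - g) (f - g) x ∂μ)
      = 2 * (∫ x, Γ Set.univ f f x ∂μ) + 2 * (∫ x, Γ Set.univ g g x ∂μ)
  /-- the Cheeger energy is computed by the minimal relaxed gradient. -/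
  cheeger_eq : ∀ f : X → ℝ, f ∈ H1 Set.univ →
    cheegerEnergy μ f = (∫⁻ x, ENNReal.ofReal (Γ Set.univ f f x) ∂μ) / 2
  /-- `|∇f|² ∈ H¹(X)` whenever `ℒf = g ∈ L²∩L⁴`. -/
  gradSq_mem : ∀ f g : X → ℝ, f ∈ H1 Set.univ →
    toSobolevCalculus.IsLap Set.univ f g → MemLp g 2 μ → MemLp g 4 μ →
    Γ Set.univ f f ∈ H1 Set.univ
  /-- the modified Bochner inequality (the Bakry–Émery condition `BE(K, N)`). -/
  bochner : ∀ f g φ : X → ℝ, f ∈ H1 Set.univ →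
    toSobolevCalculus.IsLap Set.univ f g → MemLp g 2 μ → MemLp g 4 μ →
    φ ∈ H1 Set.univ → (∀ x, 0 ≤ φ x) → MemLp φ ⊤ μ →
    ∫ x, (-(1/2) * Γ Set.univ (Γ Set.univ f f) φ x
        + g x * Γ Set.univ f φ x + φ x * (g x) ^ 2) ∂μ
      ≥ ∫ x, (K * Γ Set.univ f f x + (g x) ^ 2 / N) * φ x ∂μ

end

/-!
Multiply `f` by unit-scale cutoffs `η` of a compact exhaustion of `X`. Properness makes each `η f`
compactly supported, hence globally Lipschitz. The Leibniz rule applied to `f - η f = (1 - η) f`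
bounds `Lip (f - η f)` by `Lip f + |f|`, uniformly in `η` because every `η` is `1`-Lipschitz; since
`f - η f` vanishes where `η = 1`, both parts of the norm are dominated by the tails of the
`p`-integrable functions `f` and `Lip f + |f|` outside the exhausting sets.
-/

section

open scoped Topology

section LipConst

variable {X : Type*} [MetricSpace X] {f g : X → ℝ} {x : X} {c : ℝ}

lemma lipConst_nonneg (f : X → ℝ) (x : X) : 0 ≤ lipConst f x := by
  rw [lipConst, limsup_eq]
  -- The infimum below is `0` also where `x` is isolated (over `univ`) or the slopes are unbounded
  -- (over `∅`).
  obtain h | h := (𝓝[≠] x).eq_or_neBot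
  · simp [h]
  · refine Real.sInf_nonneg fun a ha => ?_
    obtain ⟨y, hy⟩ : ∃ y, |f y - f x| / dist y x ≤ a := Eventually.exists (f := 𝓝[≠] x) ha
    exact le_trans (by positivity) hy

lemma lipConst_le_of_eventually_abs_sub_le (hc : 0 ≤ c)
    (h : ∀ᶠ y in 𝓝 x, |f y - f x| ≤ c * dist y x) : lipConst f x ≤ c := by
  have slope_le : ∀ᶠ y in 𝓝[≠] x, |f y - f x| / dist y x ≤ c :=
    (h.filter_mono nhdsWithin_le_nhds).mono fun y hy => div_le_of_le_mul₀ dist_nonneg hc hy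
  obtain hx | hx := (𝓝[≠] x).eq_or_neBot
  · simpa [lipConst, limsup_eq, hx] using hc
  · exact limsup_le_of_le (isCoboundedUnder_le_of_le _ fun y => by positivity) slope_le

lemma eventually_abs_sub_le_of_lipConst_lt
    (hf : (fun y => f y - f x) =O[𝓝 x] fun y => dist y x) (hc : lipConst f x < c) :
    ∀ᶠ y in 𝓝 x, |f y - f x| ≤ c * dist y x := by
  have dist_ne_zero : ∀ᶠ y in 𝓝[≠] x, dist y x ≠ 0 :=
    eventually_mem_nhdsWithin.mono fun y hy => dist_ne_zero.2 hy
  have slope_bounded : (𝓝[≠] x).IsBoundedUnder (· ≤ ·) fun y => |f y - f x| / dist y x := by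
    simpa only [Real.norm_eq_abs, abs_dist] using
      (Asymptotics.isBigO_iff_isBoundedUnder_le_div dist_ne_zero).1 (hf.mono nhdsWithin_le_nhds)
  have slope_lt := eventually_nhdsWithin_iff.1 (eventually_lt_of_limsup_lt hc slope_bounded)
  filter_upwards [slope_lt] with y hy
  obtain rfl | hyx := eq_or_ne y x
  · simp
  · exact ((div_lt_iff₀ (dist_pos.2 hyx)).1 (hy hyx)).le

lemma lipConst_mul_le
    (hf : (fun y => f y - f x) =O[𝓝 x] fun y => dist y x)
    (hg : (fun y => g y - g x) =O[𝓝 x] fun y => dist y x) :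
    lipConst (f * g) x ≤ |f x| * lipConst g x + |g x| * lipConst f x := by
  have f_continuousAt : ContinuousAt f x :=
    tendsto_sub_nhds_zero_iff.1
      (hf.trans_tendsto ((continuous_id.dist continuous_const).tendsto' x 0 (dist_self x)))
  have approx_bound : ∀ ε > 0, lipConst (f * g) x ≤
      (|f x| + ε) * (lipConst g x + ε) + |g x| * (lipConst f x + ε) := by
    intro ε hε
    have hf₀ := lipConst_nonneg f x
    have hg₀ := lipConst_nonneg g x
    refine lipConst_le_of_eventually_abs_sub_le (by positivity) ?_
    filter_upwards [eventually_abs_sub_le_of_lipConst_lt hf (lt_add_of_pos_right _ hε),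
      eventually_abs_sub_le_of_lipConst_lt hg (lt_add_of_pos_right _ hε),
      f_continuousAt.abs.eventually_le_const (lt_add_of_pos_right |f x| hε)] with y hfy hgy hy
    calc |(f * g) y - (f * g) x|
        = |f y * (g y - g x) + g x * (f y - f x)| := by simp only [Pi.mul_apply]; ring_nf
      _ ≤ |f y| * |g y - g x| + |g x| * |f y - f x| := by
        simpa only [abs_mul] using abs_add_le (f y * (g y - g x)) (g x * (f y - f x))
      _ ≤ (|f x| + ε) * ((lipConst g x + ε) * dist y x)
          + |g x| * ((lipConst f x + ε) * dist y x) := by gcongr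
      _ = ((|f x| + ε) * (lipConst g x + ε) + |g x| * (lipConst f x + ε)) * dist y x := by ring
  have bound_tendsto : Tendsto
      (fun ε : ℝ => (|f x| + ε) * (lipConst g x + ε) + |g x| * (lipConst f x + ε)) (𝓝[>] 0)
      (𝓝 (|f x| * lipConst g x + |g x| * lipConst f x)) :=
    ((by fun_prop : Continuous _).tendsto' 0 _ (by ring)).mono_left nhdsWithin_le_nhds
  exact ge_of_tendsto bound_tendsto (eventually_mem_nhdsWithin.mono approx_bound)

lemma lipConst_eq_zero_of_eventuallyEq_const (h : f =ᶠ[𝓝 x] fun _ => c) : lipConst f x = 0 := by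
  refine le_antisymm (lipConst_le_of_eventually_abs_sub_le le_rfl ?_) (lipConst_nonneg f x)
  filter_upwards [h] with y hy
  simp [hy, h.self_of_nhds]

end LipConst

section LocallyLipschitz

variable {X Y : Type*} [PseudoMetricSpace X]

lemma isBigO_sub_of_locallyLipschitz [SeminormedAddCommGroup Y] {f : X → Y}
    (hf : LocallyLipschitz f) (x : X) :
    (fun y => f y - f x) =O[𝓝 x] fun y => dist y x := by
  obtain ⟨L, s, hs, hL⟩ := hf x
  refine Asymptotics.IsBigO.of_bound L ?_
  filter_upwards [hs] with y hy
  simpa only [dist_eq_norm_sub, Real.norm_of_nonneg dist_nonneg] using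
    hL.dist_le_mul y hy x (mem_of_mem_nhds hs)

lemma locallyLipschitz_mul {f g : X → ℝ} (hf : LocallyLipschitz f) (hg : LocallyLipschitz g) :
    LocallyLipschitz (f * g) :=
  (contDiff_fst.mul contDiff_snd : ContDiff ℝ 1 fun z : ℝ × ℝ => z.1 * z.2).locallyLipschitz.comp
    (hf.prodMk hg)

lemma exists_mem_nhds_forall_dist_le_mul [PseudoMetricSpace Y] {f : X → Y}
    (hf : LocallyLipschitz f) (hbdd : Bornology.IsBounded (range f)) (x : X) :
    ∃ s ∈ 𝓝 x, ∃ L : ℝ≥0, ∀ y ∈ s, ∀ z, dist (f y) (f z) ≤ L * dist y z := by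
  obtain ⟨L, t, ht, hL⟩ := hf x
  obtain ⟨r, hr, hrt⟩ := Metric.mem_nhds_iff.1 ht
  obtain ⟨C, hC⟩ := isBounded_range_iff.1 hbdd
  have hC₀ : 0 ≤ C := dist_nonneg.trans (hC x x)
  refine ⟨ball x (r / 2), ball_mem_nhds x (half_pos hr), L + ⟨C / (r / 2), by positivity⟩,
    fun y hy z => ?_⟩
  change _ ≤ (L + C / (r / 2)) * dist y z
  rw [add_mul]
  obtain hz | hz := lt_or_ge (dist y z) (r / 2)
  · have z_mem : z ∈ ball x r := by
      rw [mem_ball] at hy ⊢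
      linarith [dist_triangle_left z x y]
    exact le_add_of_le_of_nonneg
      (hL.dist_le_mul y (hrt (ball_subset_ball (half_le_self hr.le) hy)) z (hrt z_mem))
      (by positivity)
  · refine le_add_of_nonneg_of_le (by positivity) ((hC y z).trans ?_)
    rw [div_mul_eq_mul_div, le_div_iff₀ (half_pos hr)]
    gcongr

lemma exists_forall_mem_dist_le_mul_of_isCompact [PseudoMetricSpace Y] {f : X → Y}
    (hf : LocallyLipschitz f) (hbdd : Bornology.IsBounded (range f)) {K : Set X}
    (hK : IsCompact K) : ∃ L : ℝ≥0, ∀ y ∈ K, ∀ z, dist (f y) (f z) ≤ L * dist y z := by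
  refine hK.induction_on ⟨0, by simp⟩ (fun s t hst ht => ?_) (fun s t hs ht => ?_) fun x _ => ?_
  · exact ht.imp fun L hL y hy => hL y (hst hy)
  · obtain ⟨L, hL⟩ := hs
    obtain ⟨M, hM⟩ := ht
    refine ⟨max L M, fun y hy z => hy.elim (fun hy => ?_) fun hy => ?_⟩
    · exact (hL y hy z).trans (by gcongr; exact le_max_left L M)
    · exact (hM y hy z).trans (by gcongr; exact le_max_right L M)
  · obtain ⟨s, hs, hL⟩ := exists_mem_nhds_forall_dist_le_mul hf hbdd x
    exact ⟨s, mem_nhdsWithin_of_mem_nhds hs, hL⟩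

lemma exists_lipschitzWith_of_hasCompactSupport [SeminormedAddCommGroup Y] {f : X → Y}
    (hf : LocallyLipschitz f) (hsupp : HasCompactSupport f) : ∃ L, LipschitzWith L f := by
  obtain ⟨L, hL⟩ := exists_forall_mem_dist_le_mul_of_isCompact hf
    (hsupp.isCompact_range hf.continuous).isBounded hsupp
  refine ⟨L, LipschitzWith.of_dist_le_mul fun y z => ?_⟩
  by_cases hy : y ∈ tsupport f
  · exact hL y hy z
  by_cases hz : z ∈ tsupport f
  · simpa only [dist_comm] using hL z hz y
  · rw [image_eq_zero_of_notMem_tsupport hy, image_eq_zero_of_notMem_tsupport hz, dist_self]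
    positivity

end LocallyLipschitz

/-- The standard cutoff `x ↦ max (1 - d(x, E)) 0` of a set `E` in a metric space, equal to `1` on
`E` and to `0` off its unit neighbourhood: the real-valued form of `thickenedIndicator`. For
empty `E` it vanishes identically. -/
noncomputable def unitCutoff {X : Type*} [PseudoMetricSpace X] (E : Set X) (x : X) : ℝ :=
  thickenedIndicator one_pos E x

section UnitCutoff

variable {X : Type*} [PseudoMetricSpace X]

lemma unitCutoff_mem_Icc (E : Set X) (x : X) : unitCutoff E x ∈ Icc 0 1 :=
  ⟨NNReal.coe_nonneg _, NNReal.coe_le_one.2 (thickenedIndicator_le_one one_pos E x)⟩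

lemma unitCutoff_eq_one {E : Set X} {x : X} (hx : x ∈ E) : unitCutoff E x = 1 := by
  rw [unitCutoff, thickenedIndicator_one one_pos E hx, NNReal.coe_one]

lemma abs_one_sub_unitCutoff_le_one (E : Set X) (x : X) : |1 - unitCutoff E x| ≤ 1 := by
  obtain ⟨h₀, h₁⟩ := unitCutoff_mem_Icc E x
  rw [abs_le]
  constructor <;> linarith

lemma lipschitzWith_unitCutoff (E : Set X) : LipschitzWith 1 (unitCutoff E) := by
  have h := NNReal.isometry_coe.lipschitz.comp (lipschitzWith_thickenedIndicator one_pos E)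
  rwa [Real.toNNReal_one, inv_one, mul_one] at h

lemma hasCompactSupport_unitCutoff [ProperSpace X] {E : Set X}
    (hE : Bornology.IsBounded E) : HasCompactSupport (unitCutoff E) := by
  refine HasCompactSupport.intro (isCompact_of_isClosed_isBounded isClosed_cthickening
    (hE.cthickening (δ := 1))) fun x hx => ?_
  rw [unitCutoff, thickenedIndicator_zero one_pos E (mt (thickening_subset_cthickening 1 E ·) hx),
    NNReal.coe_zero]

lemma sub_unitCutoff_mul (E : Set X) (f : X → ℝ) :
    f - unitCutoff E * f = (1 - unitCutoff E) * f := by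
  ring

lemma norm_sub_unitCutoff_mul_le_indicator (E : Set X) (f : X → ℝ) (x : X) :
    ‖(f - unitCutoff E * f) x‖ ≤ ‖(interior E)ᶜ.indicator f x‖ := by
  rw [sub_unitCutoff_mul, Pi.mul_apply, Pi.sub_apply, Pi.one_apply]
  by_cases hx : x ∈ interior E
  · simp [unitCutoff_eq_one (interior_subset hx)]
  · rw [indicator_of_mem (mem_compl hx), norm_mul]
    exact mul_le_of_le_one_left (norm_nonneg _) (abs_one_sub_unitCutoff_le_one E x)

end UnitCutoff

section LipConstUnitCutoff

variable {X : Type*} [MetricSpace X]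

lemma lipConst_one_sub_unitCutoff_le_one (E : Set X) (x : X) :
    lipConst (1 - unitCutoff E) x ≤ 1 := by
  refine lipConst_le_of_eventually_abs_sub_le zero_le_one (Eventually.of_forall fun y => ?_)
  simpa [Real.dist_eq, abs_sub_comm] using (lipschitzWith_unitCutoff E).dist_le_mul y x

lemma lipConst_sub_unitCutoff_mul_le (E : Set X) {f : X → ℝ} (hf : LocallyLipschitz f) (x : X) :
    lipConst (f - unitCutoff E * f) x ≤ lipConst f x + |f x| := by
  have cutoff_locallyLipschitz : LocallyLipschitz (1 - unitCutoff E) :=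
    (LocallyLipschitz.const 1).sub (lipschitzWith_unitCutoff E).locallyLipschitz
  calc lipConst (f - unitCutoff E * f) x
      = lipConst ((1 - unitCutoff E) * f) x := by rw [sub_unitCutoff_mul]
    _ ≤ |1 - unitCutoff E x| * lipConst f x + |f x| * lipConst (1 - unitCutoff E) x :=
      lipConst_mul_le (isBigO_sub_of_locallyLipschitz cutoff_locallyLipschitz x)
        (isBigO_sub_of_locallyLipschitz hf x)
    _ ≤ lipConst f x + |f x| :=
      add_le_add
        (mul_le_of_le_one_left (lipConst_nonneg f x) (abs_one_sub_unitCutoff_le_one E x))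
        (mul_le_of_le_one_right (abs_nonneg _) (lipConst_one_sub_unitCutoff_le_one E x))

lemma norm_lipConst_sub_unitCutoff_mul_le_indicator (E : Set X) {f : X → ℝ}
    (hf : LocallyLipschitz f) (x : X) :
    ‖lipConst (f - unitCutoff E * f) x‖ ≤
      (interior E)ᶜ.indicator (fun y => lipConst f y + |f y|) x := by
  rw [Real.norm_of_nonneg (lipConst_nonneg _ x)]
  by_cases hx : x ∈ interior E
  · have sub_eq_zero : f - unitCutoff E * f =ᶠ[𝓝 x] fun _ => 0 := by
      filter_upwards [mem_interior_iff_mem_nhds.1 hx] with y hy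
      simp [unitCutoff_eq_one hy]
    simp [hx, lipConst_eq_zero_of_eventuallyEq_const sub_eq_zero]
  · rw [indicator_of_mem (mem_compl hx)]
    exact lipConst_sub_unitCutoff_mul_le E hf x

end LipConstUnitCutoff

section Tail

variable {α ι E : Type*} [MeasurableSpace α] {μ : Measure α} {p : ℝ≥0∞}

lemma tendsto_eLpNorm_indicator_compl_of_aecover [NormedAddCommGroup E] {l : Filter ι}
    [l.IsCountablyGenerated] {s : ι → Set α} (hs : AECover μ l s) (hp₀ : p ≠ 0) (hp : p ≠ ⊤)
    {f : α → E} (hf : MemLp f p μ) :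
    Tendsto (fun i => eLpNorm ((s i)ᶜ.indicator f) p μ) l (𝓝 0) := by
  have p_pos : 0 < p.toReal := ENNReal.toReal_pos hp₀ hp
  have lintegral_tendsto :
      Tendsto (fun i => ∫⁻ x, ‖(s i)ᶜ.indicator f x‖ₑ ^ p.toReal ∂μ) l (𝓝 0) := by
    rw [← lintegral_zero (μ := μ)]
    refine tendsto_lintegral_filter_of_dominated_convergence' (fun x => ‖f x‖ₑ ^ p.toReal)
      (Eventually.of_forall fun i => ?_) (Eventually.of_forall fun i => ae_of_all _ fun x => ?_)
      (lintegral_rpow_enorm_lt_top_of_eLpNorm_lt_top hp₀ hp hf.2).ne ?_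
    · exact (hf.1.indicator (hs.measurableSet i).compl).enorm.pow_const _
    · exact ENNReal.rpow_le_rpow (enorm_indicator_le_enorm_self f x) p_pos.le
    · filter_upwards [hs.ae_eventually_mem] with x hx
      refine tendsto_const_nhds.congr' (hx.mono fun i hi => ?_)
      simp [hi, p_pos]
  simp_rw [eLpNorm_eq_lintegral_rpow_enorm_toReal hp₀ hp]
  simpa [p_pos] using lintegral_tendsto.ennrpow_const (1 / p.toReal)

lemma aecover_interior_compactExhaustion [TopologicalSpace α] [OpensMeasurableSpace α]
    (K : CompactExhaustion α) : AECover μ atTop fun n => interior (K n) where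
  ae_eventually_mem := ae_of_all _ fun x => by
    obtain ⟨n, hn⟩ := K.exists_mem x
    filter_upwards [eventually_gt_atTop n] with m hm
    exact K.subset_interior hm hn
  measurableSet _ := isOpen_interior.measurableSet

end Tail

end

theorem W1p_eq_W1p0_general {X : Type*} [MetricSpace X] [ProperSpace X] [MeasurableSpace X]
    [OpensMeasurableSpace X] {μ : Measure X} {p : ℝ≥0∞} (hp₀ : p ≠ 0) (hp : p ≠ ⊤)
    {f : X → ℝ} (hf : LocallyLipschitz f) (hfp : MemLp f p μ) (hlf : MemLp (lipConst f) p μ) :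
    ∃ g : ℕ → X → ℝ,
      (∀ j, (∃ L, LipschitzWith L (g j)) ∧ IsCompact (tsupport (g j))) ∧
      Tendsto (fun j => eLpNorm (f - g j) p μ + eLpNorm (lipConst (f - g j)) p μ)
        atTop (nhds 0) := by
  let K : CompactExhaustion X := default
  have hsupp (j : ℕ) : HasCompactSupport (unitCutoff (K j) * f) :=
    (hasCompactSupport_unitCutoff (K.isCompact j).isBounded).mul_right
  have hlip (j : ℕ) : LocallyLipschitz (unitCutoff (K j) * f) :=
    locallyLipschitz_mul (lipschitzWith_unitCutoff (K j)).locallyLipschitz hf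
  refine ⟨fun j => unitCutoff (K j) * f, fun j =>
    ⟨exists_lipschitzWith_of_hasCompactSupport (hlip j) (hsupp j), hsupp j⟩, ?_⟩
  have hK : AECover μ atTop fun j => interior (K j) := aecover_interior_compactExhaustion K
  have tail_tendsto := (tendsto_eLpNorm_indicator_compl_of_aecover hK hp₀ hp hfp).add
    (tendsto_eLpNorm_indicator_compl_of_aecover hK hp₀ hp (hlf.add hfp.norm))
  rw [add_zero] at tail_tendsto
  refine tendsto_of_tendsto_of_tendsto_of_le_of_le tendsto_const_nhds tail_tendsto
    (fun _ => zero_le) fun j => add_le_add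
      (eLpNorm_mono (norm_sub_unitCutoff_mul_le_indicator (K j) f))
      (eLpNorm_mono_real (norm_lipConst_sub_unitCutoff_mul_le_indicator (K j) hf))

/-- **Lemma 2.5(i): `W^{1,p}(X) = W^{1,p}₀(X)`.** On an `RCD*(K, N)` space, for any
`1 < p < ∞`, Lipschitz functions with compact support are dense in `W^{1,p}(X)`:
every locally Lipschitz `f` with finite `W^{1,p}`-norm is approximated, in the
`W^{1,p}`-norm `‖·‖_{L^p} + ‖Lip(·)‖_{L^p}`, by compactly supported Lipschitz functions.
(Since `W^{1,p}(X)` is by definition the closure of such `f`, this is exactly the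
statement `W^{1,p}(X) = W^{1,p}₀(X)`.) -/
theorem W1p_eq_W1p0
    {X : Type*} [MetricSpace X] [MeasurableSpace X] [BorelSpace X]
    [CompleteSpace X] [ProperSpace X]
    (μ : Measure X) [μ.IsOpenPosMeasure] [IsLocallyFiniteMeasure μ]
    (K N : ℝ) (hN : 1 ≤ N) (S : RCD X μ K N)
    (p : ℝ≥0∞) (hp1 : 1 < p) (hp2 : p < ⊤)
    (f : X → ℝ) (hlip : LocallyLipschitz f)
    (hfp : MemLp f p μ) (hlf : MemLp (lipConst f) p μ) :
    ∃ g : ℕ → X → ℝ,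
      (∀ j, (∃ L, LipschitzWith L (g j)) ∧ IsCompact (tsupport (g j))) ∧
      Tendsto (fun j => eLpNorm (f - g j) p μ + eLpNorm (lipConst (f - g j)) p μ)
        atTop (nhds 0) := by
  exact W1p_eq_W1p0_general (zero_lt_one.trans hp1).ne' hp2.ne hlip hfp hlf
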